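/- A special case of chain factorization for the two-loop graph: let G consist of two vertices v, v' joined by three internally disjoint directed paths p_0, p_1, p_2 from v to v', where all edges of p_1 and p_2 are oriented forward (E_1 and E_2) while p_0 may contain backward edges (E_{0̄} is its set of backward edges, E_0 its forward edges). Then N(G) = (Σ_{e∈E_{0̄}} X_e)(Σ_{e∈E_{1̄}} X_e) + (Σ_{e∈E_{0̄}} X_e)(Σ_{e∈E_2} X_e) + (Σ_{e∈E_1} X_e)(Σ_{e∈E_2} X_e), where X_e = x_{α(e)} - x_{ω(e)}; in particular if E_{0̄} = ∅ (i.e. p_0 is a chain), N(G) = (Σ_{e∈E_1} X_e)(Σ_{e∈E_2} X_e) factorizes. -/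

import Mathlib

open scoped BigOperators

/-- The field of rational functions in variables indexed by `V` over `ℚ`. -/
abbrev K (V : Type) : Type := FractionRing (MvPolynomial V ℚ)

/-- The variable `x_v` seen inside the field of rational functions. -/
noncomputable def xv {V : Type} (v : V) : K V :=
  algebraMap (MvPolynomial V ℚ) (K V) (MvPolynomial.X v)

/-- `ψ_w = 1 / ∏ (x_{w_i} - x_{w_{i+1}})` for a word `w`. -/
noncomputable def psi {V : Type} (w : List V) : K V :=
  (((w.zip w.tail).map fun p => xv p.1 - xv p.2).prod)⁻¹

/-- The word (list of vertices) associated to an enumeration `σ` of the vertex set `W`. -/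
def wordOf {V : Type} (W : Finset V) (σ : Fin W.card ≃ W) : List V :=
  (List.finRange W.card).map fun i => ((σ i : W) : V)

/-- `σ` enumerates `W` in an order compatible with all edges of `E`:
the origin of every edge appears before its end. -/
def IsExt {V : Type} (W : Finset V) (E : Finset (V × V)) (σ : Fin W.card ≃ W) : Prop :=
  ∀ e ∈ E, ∃ i j : Fin W.card, i < j ∧ ((σ i : W) : V) = e.1 ∧ ((σ j : W) : V) = e.2

instance {V : Type} [DecidableEq V] (W : Finset V) (E : Finset (V × V)) (σ : Fin W.card ≃ W) :
    Decidable (IsExt W E σ) := by unfold IsExt; exact inferInstance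

/-- `Ψ(G) = Σ_{w ∈ L(G)} ψ_w`, the sum over linear extensions of the graph with
vertex set `W` and edge set `E`. -/
noncomputable def PsiG {V : Type} [DecidableEq V] (W : Finset V) (E : Finset (V × V)) : K V :=
  ∑ σ : Fin W.card ≃ W, if IsExt W E σ then psi (wordOf W σ) else 0

/-- `N(G) = Ψ(G) ⬝ ∏_{(a,b) ∈ E} (x_a - x_b)`. -/
noncomputable def NG {V : Type} [DecidableEq V] (W : Finset V) (E : Finset (V × V)) : K V :=
  PsiG W E * ∏ e ∈ E, (xv e.1 - xv e.2)

/-- `φ(G)`, the formal sum of the linear extensions of `G` in the free abelian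
group on words. -/
noncomputable def phiG {V : Type} [DecidableEq V] (W : Finset V) (E : Finset (V × V)) :
    List V →₀ ℤ :=
  ∑ σ : Fin W.card ≃ W, if IsExt W E σ then Finsupp.single (wordOf W σ) 1 else 0

/-- The graph has no directed circuit. -/
def Acyclic {V : Type} (E : Finset (V × V)) : Prop :=
  ∀ v : V, ¬ Relation.TransGen (fun a b => (a, b) ∈ E) v v

/-- The underlying undirected simple graph of the directed graph with edge set `E`. -/
def undirected {V : Type} (E : Finset (V × V)) : SimpleGraph V :=
  SimpleGraph.fromRel fun a b => (a, b) ∈ E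

/-- The cyclically-consecutive pairs of a list of vertices. -/
def cyclePairs {V : Type} [DecidableEq V] (vs : List V) : Finset (V × V) :=
  Finset.image (fun i : Fin vs.length => (vs.get i, vs.get (finRotate _ i))) Finset.univ

/-- `vs` is (the vertex list of) a cycle of the graph `E`, whose set of forward
edges (edges traversed in their graph orientation) is `HE`. -/
def IsCycle {V : Type} [DecidableEq V] (E : Finset (V × V)) (vs : List V)
    (HE : Finset (V × V)) : Prop :=
  2 ≤ vs.length ∧ vs.Nodup ∧ HE ⊆ cyclePairs vs ∧ HE ⊆ E ∧
    ∀ p ∈ cyclePairs vs, p ∉ HE → (p.2, p.1) ∈ E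

/-- The set of consecutive pairs of a list (the steps of a path). -/
def pathPairs {V : Type} [DecidableEq V] (l : List V) : Finset (V × V) :=
  (l.zip l.tail).toFinset

/-- The edge set of a path `l` whose set of forward steps is `F`: the forward steps
are edges of the graph as they are, the other steps are traversed backwards. -/
def orientEdges {V : Type} [DecidableEq V] (l : List V) (F : Finset (V × V)) :
    Finset (V × V) :=
  F ∪ (pathPairs l \ F).image Prod.swap


section Helpers
set_option linter.unusedSectionVars false
set_option linter.unusedSimpArgs false
variable {V : Type} [DecidableEq V]

lemma xv_ne {a b : V} (h : a ≠ b) : xv a - xv b ≠ 0 := by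
  rw [sub_ne_zero]
  intro hh
  exact h (MvPolynomial.X_injective (IsFractionRing.injective (MvPolynomial V ℚ) (K V) hh))

lemma psi_cons_cons (a b : V) (l : List V) :
    psi (a :: b :: l) = (xv a - xv b)⁻¹ * psi (b :: l) := by
  simp [psi, mul_comm]

lemma psi_single (a : V) : psi [a] = 1 := by simp [psi]

/-- all edges are respected by the word. -/
def Resp (E : Finset (V × V)) (l : List V) : Prop :=
  ∀ e ∈ E, l.idxOf e.1 < l.idxOf e.2

instance (E : Finset (V × V)) (l : List V) : Decidable (Resp E l) := by
  unfold Resp; exact inferInstance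

noncomputable def Q (L : List V) (E : Finset (V × V)) : K V :=
  ((L.permutations'.map fun l => if Resp E l then psi l else 0)).sum

lemma wordOf_perm (W : Finset V) (σ : Fin W.card ≃ W) : (wordOf W σ).Perm W.toList := by
  rw [List.perm_ext_iff_of_nodup]
  · intro a
    simp only [wordOf, List.mem_map, List.mem_finRange, true_and, Finset.mem_toList]
    constructor
    · rintro ⟨i, rfl⟩; exact (σ i).2
    · intro h; exact ⟨σ.symm ⟨a, h⟩, by simp⟩
  · unfold wordOf
    apply List.Nodup.map _ (List.nodup_finRange _)
    intro i j h
    exact σ.injective (Subtype.ext h)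
  · exact W.nodup_toList

lemma idxOf_wordOf (W : Finset V) (σ : Fin W.card ≃ W) (i : Fin W.card) :
    (wordOf W σ).idxOf ((σ i : W) : V) = i := by
  have hn : (wordOf W σ).Nodup := (wordOf_perm W σ).nodup_iff.2 W.nodup_toList
  have hl : (i : ℕ) < (wordOf W σ).length := by simp [wordOf]
  have := hn.idxOf_getElem i hl
  simpa [wordOf] using this

lemma isExt_iff (E : Finset (V × V)) (W : Finset V) (hE : ∀ e ∈ E, e.1 ∈ W ∧ e.2 ∈ W)
    (σ : Fin W.card ≃ W) : IsExt W E σ ↔ Resp E (wordOf W σ) := by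
  unfold IsExt Resp
  refine forall₂_congr fun e he => ?_
  constructor
  · rintro ⟨i, j, hij, h1, h2⟩
    rw [← h1, ← h2, idxOf_wordOf, idxOf_wordOf]; exact hij
  · intro h
    refine ⟨σ.symm ⟨e.1, (hE e he).1⟩, σ.symm ⟨e.2, (hE e he).2⟩, ?_, by simp, by simp⟩
    rw [Fin.lt_def, ← idxOf_wordOf W σ, ← idxOf_wordOf W σ]
    simpa using h

lemma PsiG_eq_Q (W : Finset V) (E : Finset (V × V)) (hE : ∀ e ∈ E, e.1 ∈ W ∧ e.2 ∈ W) :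
    PsiG W E = Q W.toList E := by
  have hnd : W.toList.permutations'.Nodup := by
    rw [← (List.permutations_perm_permutations' _).nodup_iff]
    exact List.nodup_permutations _ W.nodup_toList
  unfold PsiG Q
  rw [← List.sum_toFinset _ hnd]
  refine Finset.sum_bij (fun σ _ => wordOf W σ) ?_ ?_ ?_ ?_
  · intro σ _
    simpa using wordOf_perm W σ
  · intro σ _ τ _ h
    ext i
    have := List.map_inj_left.1 h i (List.mem_finRange i)
    exact this
  · intro l hl
    have hl : l.Perm W.toList := by simpa using hl
    have hln : l.Nodup := hl.nodup_iff.2 W.nodup_toList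
    have hlen : W.card = l.length := by rw [hl.length_eq]; simp
    let σ : Fin W.card ≃ W := (finCongr hlen).trans ((hln.getEquiv l).trans
      (Equiv.subtypeEquivRight fun x => by rw [hl.mem_iff, Finset.mem_toList]))
    refine ⟨σ, Finset.mem_univ _, ?_⟩
    apply List.ext_getElem
    · simp [wordOf, hlen]
    · intro i h1 h2
      simp [wordOf, σ, List.Nodup.getEquiv]
  · intro σ _
    simp only [isExt_iff E W hE]

lemma resp_ins (E : Finset (V × V)) (a : V) (hE : ∀ e ∈ E, e.1 ≠ a ∧ e.2 ≠ a) (l l' : List V)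
    (h : l' ∈ l.permutations'Aux a) : Resp E l' ↔ Resp E l := by
  unfold Resp
  refine forall₂_congr fun e he => ?_
  obtain ⟨h1, h2⟩ := hE e he
  generalize e.1 = p at *
  generalize e.2 = q at *
  clear hE he
  induction l generalizing l' with
  | nil =>
    simp only [List.permutations'Aux, List.mem_singleton] at h
    subst h; simp [List.idxOf_cons, h1.symm, h2.symm]
  | cons y ys ih =>
    simp only [List.permutations'Aux, List.mem_cons, List.mem_map] at h
    rcases h with rfl | ⟨m, hm, rfl⟩
    · rw [List.idxOf_cons_ne _ h1.symm, List.idxOf_cons_ne _ h2.symm]; omega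
    · have := ih m hm
      by_cases e1 : y = p <;> by_cases e2 : y = q
      · subst e1; subst e2; simp
      · subst e1; simp [List.idxOf_cons_ne _ e2]
      · subst e2; simp
      · simpa [List.idxOf_cons_ne _ e1, List.idxOf_cons_ne _ e2] using this

lemma sumA (a : V) (t : List V) : ∀ b, (b :: t).Nodup → a ∉ b :: t →
    ((t.permutations'Aux a).map fun l => psi (b :: l)).sum = psi (b :: t) * (xv b - xv a)⁻¹ := by
  induction t with
  | nil =>
    intro b _ h
    simp [List.permutations'Aux, psi_cons_cons, psi_single]
  | cons c t ih =>
    intro b hn h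
    have hc := ih c (hn.of_cons) (by simp at h ⊢; tauto)
    simp only [List.permutations'Aux, List.map_cons, List.map_map, List.sum_cons,
      Function.comp_def, psi_cons_cons b c, List.sum_map_mul_left, hc]
    rw [psi_cons_cons b a, psi_cons_cons a c]
    simp only [List.mem_cons, not_or] at h
    have hbc : b ≠ c := by simp at hn; tauto
    have h1 := xv_ne h.1
    have h2 := xv_ne h.2.1
    have h3 := xv_ne hbc
    have h1' : xv b - xv a ≠ 0 := xv_ne (Ne.symm h.1)
    have h2' : xv c - xv a ≠ 0 := xv_ne (Ne.symm h.2.1)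
    field_simp
    ring

lemma sumTot (a : V) (l : List V) (hl : l ≠ []) (hn : l.Nodup) (h : a ∉ l) :
    ((l.permutations'Aux a).map psi).sum = 0 := by
  cases l with
  | nil => simp at hl
  | cons b t =>
    simp only [List.permutations'Aux, List.map_cons, List.map_map, List.sum_cons,
      Function.comp_def, sumA a t b hn h, psi_cons_cons a b]
    have hab : a ≠ b := by simp at h; tauto
    have h1 := xv_ne hab
    have h1' := xv_ne hab.symm
    field_simp
    ring

lemma sumP (a p : V) (t : List V) : ∀ b, (b :: t).Nodup → a ∉ b :: t → p ∈ b :: t →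
    ((t.permutations'Aux a).map fun l => if (b :: l).idxOf p < (b :: l).idxOf a
      then psi (b :: l) else 0).sum = psi (b :: t) * (xv p - xv a)⁻¹ := by
  induction t with
  | nil =>
    intro b hn h hp
    have hpb : p = b := by simpa using hp
    subst hpb
    have hpa : p ≠ a := by simp at h; tauto
    simp [List.permutations'Aux, psi_cons_cons, psi_single, List.idxOf_cons, hpa]
  | cons c t ih =>
    intro b hn h hp
    have hba : b ≠ a := by simp at h; tauto
    by_cases hpb : p = b
    · subst hpb
      rw [← sumA a _ p hn h]
      congr 1
      apply List.map_congr_left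
      intro l _
      rw [if_pos]
      simp [List.idxOf_cons, hba]
    · have hp' : p ∈ c :: t := by simp at hp ⊢; tauto
      have hc := ih c (hn.of_cons) (by simp at h ⊢; tauto) hp'
      simp only [List.permutations'Aux, List.map_cons, List.map_map, List.sum_cons,
        Function.comp_def]
      rw [if_neg (by simp [List.idxOf_cons, hba, Ne.symm hpb]), zero_add,
        psi_cons_cons, mul_assoc, ← hc, ← List.sum_map_mul_left]
      congr 1
      apply List.map_congr_left
      intro l _
      rw [List.idxOf_cons_ne _ (Ne.symm hpb), List.idxOf_cons_ne _ hba, psi_cons_cons b c]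
      simp

lemma sumPfull (a p : V) (l : List V) (hn : l.Nodup) (h : a ∉ l) (hp : p ∈ l) :
    ((l.permutations'Aux a).map fun l => if l.idxOf p < l.idxOf a
      then psi l else 0).sum = psi l * (xv p - xv a)⁻¹ := by
  cases l with
  | nil => simp at hp
  | cons b t =>
    rw [← sumP a p t b hn h hp]
    simp [List.permutations'Aux, Function.comp_def]

lemma sumPfull' (a p : V) (l : List V) (hn : l.Nodup) (h : a ∉ l) (hp : p ∈ l) :
    ((l.permutations'Aux a).map fun l => if l.idxOf a < l.idxOf p
      then psi l else 0).sum = psi l * (xv a - xv p)⁻¹ := by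
  have h1 := sumPfull a p l hn h hp
  have h2 := sumTot a l (by rintro rfl; simp at hp) hn h
  have h3 : ((l.permutations'Aux a).map psi).sum =
      ((l.permutations'Aux a).map fun l => if l.idxOf p < l.idxOf a
        then psi l else 0).sum + ((l.permutations'Aux a).map fun l => if l.idxOf a < l.idxOf p
        then psi l else 0).sum := by
    rw [← List.sum_map_add]
    congr 1
    apply List.map_congr_left
    intro m hm
    have hmp : p ∈ m := by
      have : m.Perm (a :: l) := by
        rw [← List.mem_permutations']
        exact List.mem_flatMap.2 ⟨l, List.mem_permutations'.2 (List.Perm.refl l), hm⟩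
      rw [this.mem_iff]; simp [hp]
    rcases lt_trichotomy (m.idxOf p) (m.idxOf a) with hh | hh | hh
    · simp [hh, hh.not_gt]
    · rw [List.idxOf_inj hmp] at hh
      subst hh; exact absurd hp h
    · simp [hh, hh.not_gt]
  rw [h2, h1] at h3
  rw [← neg_sub (xv p), inv_neg]
  linear_combination -h3

lemma Q_perm (L L' : List V) (h : L.Perm L') (E : Finset (V × V)) : Q L E = Q L' E := by
  unfold Q
  exact (h.permutations'.map _).sum_eq

lemma Q_cons (a : V) (L : List V) (E : Finset (V × V)) :
    Q (a :: L) E = (L.permutations'.map fun l =>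
      ((l.permutations'Aux a).map fun l' => if Resp E l' then psi l' else 0).sum).sum := by
  unfold Q
  simp only [List.permutations', List.map_flatMap]
  rw [List.flatMap_def, List.sum_flatten, List.map_map]
  rfl

lemma Q_iso (a : V) (L : List V) (E : Finset (V × V)) (hL : L ≠ []) (hn : L.Nodup) (ha : a ∉ L)
    (hE : ∀ e ∈ E, e.1 ∈ L ∧ e.2 ∈ L) : Q (a :: L) E = 0 := by
  rw [Q_cons]
  apply List.sum_eq_zero
  intro x hx
  obtain ⟨l, hl, rfl⟩ := List.mem_map.1 hx
  rw [List.mem_permutations'] at hl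
  have hE' : ∀ e ∈ E, e.1 ≠ a ∧ e.2 ≠ a := fun e he =>
    ⟨fun h => ha (h ▸ (hE e he).1), fun h => ha (h ▸ (hE e he).2)⟩
  have hl0 : l ≠ [] := by rintro rfl; exact hL (by simpa using hl.symm)
  have := sumTot a l hl0 (hl.nodup_iff.2 hn) (by rwa [hl.mem_iff])
  by_cases hr : Resp E l
  · rw [← this]
    congr 1
    apply List.map_congr_left
    intro l' hl'
    rw [if_pos ((resp_ins E a hE' l l' hl').2 hr)]
  · apply List.sum_eq_zero
    intro y hy
    obtain ⟨l', hl', rfl⟩ := List.mem_map.1 hy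
    rw [if_neg (fun h => hr ((resp_ins E a hE' l l' hl').1 h))]

lemma resp_insert (e : V × V) (E : Finset (V × V)) (l : List V) :
    Resp (insert e E) l ↔ l.idxOf e.1 < l.idxOf e.2 ∧ Resp E l := by
  simp [Resp]

lemma Q_edge (a : V) (L : List V) (E : Finset (V × V)) (e : V × V) (hn : L.Nodup) (ha : a ∉ L)
    (hE : ∀ e ∈ E, e.1 ∈ L ∧ e.2 ∈ L) (he : (e.1 ∈ L ∧ e.2 = a) ∨ (e.1 = a ∧ e.2 ∈ L)) :
    Q (a :: L) (insert e E) = Q L E * (xv e.1 - xv e.2)⁻¹ := by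
  rw [Q_cons, Q, ← List.sum_map_mul_right]
  congr 1
  apply List.map_congr_left
  intro l hl
  rw [List.mem_permutations'] at hl
  have hE' : ∀ e ∈ E, e.1 ≠ a ∧ e.2 ≠ a := fun e he =>
    ⟨fun h => ha (h ▸ (hE e he).1), fun h => ha (h ▸ (hE e he).2)⟩
  have key : ((l.permutations'Aux a).map fun l => if l.idxOf e.1 < l.idxOf e.2
      then psi l else 0).sum = psi l * (xv e.1 - xv e.2)⁻¹ := by
    have h1 : l.Nodup := hl.nodup_iff.2 hn
    have h2 : a ∉ l := by rwa [hl.mem_iff]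
    rcases he with ⟨hp, hq⟩ | ⟨hq, hp⟩
    · rw [hq]; exact sumPfull a e.1 l h1 h2 (hl.mem_iff.2 hp)
    · rw [hq]; exact sumPfull' a e.2 l h1 h2 (hl.mem_iff.2 hp)
  by_cases hr : Resp E l
  · rw [if_pos hr, ← key]
    congr 1
    apply List.map_congr_left
    intro l' hl'
    simp only [resp_insert, (resp_ins E a hE' l l' hl').2 hr, and_true]
  · rw [if_neg hr, zero_mul]
    apply List.sum_eq_zero
    intro y hy
    obtain ⟨l', hl', rfl⟩ := List.mem_map.1 hy
    rw [if_neg]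
    intro h
    exact hr ((resp_ins E a hE' l l' hl').1 ((resp_insert _ _ _).1 h).2)

/-- forests built by adding leaves or isolated vertices -/
inductive Forest : List V → Finset (V × V) → Prop
  | single (a : V) : Forest [a] ∅
  | iso (a : V) (L : List V) (E : Finset (V × V)) : Forest L E → a ∉ L → Forest (a :: L) E
  | edge (a : V) (L : List V) (E : Finset (V × V)) (e : V × V) : Forest L E → a ∉ L →
      ((e.1 ∈ L ∧ e.2 = a) ∨ (e.1 = a ∧ e.2 ∈ L)) → Forest (a :: L) (insert e E)

lemma Forest.spec {L : List V} {E : Finset (V × V)} (h : Forest L E) :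
    L.Nodup ∧ L ≠ [] ∧ (∀ e ∈ E, e.1 ∈ L ∧ e.2 ∈ L) ∧ E.card + 1 ≤ L.length ∧
    Q L E = if E.card + 1 = L.length then (∏ e ∈ E, (xv e.1 - xv e.2))⁻¹ else 0 := by
  induction h with
  | single a => simp [Q, psi_single, Resp]
  | iso a L E hF ha ih =>
    obtain ⟨h1, h2, h3, h4, h5⟩ := ih
    refine ⟨List.nodup_cons.2 ⟨ha, h1⟩, by simp, fun e he => ?_, by simp; omega, ?_⟩
    · have := h3 e he; simp [this]
    · rw [Q_iso a L E h2 h1 ha h3, if_neg]; simp; omega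
  | edge a L E e hF ha he ih =>
    obtain ⟨h1, h2, h3, h4, h5⟩ := ih
    have hne : e ∉ E := by
      intro h
      have := h3 e h
      rcases he with ⟨_, hq⟩ | ⟨hq, _⟩
      · exact ha (hq ▸ this.2)
      · exact ha (hq ▸ this.1)
    refine ⟨List.nodup_cons.2 ⟨ha, h1⟩, by simp, fun f hf => ?_, ?_, ?_⟩
    · rcases Finset.mem_insert.1 hf with rfl | hf
      · rcases he with ⟨hp, hq⟩ | ⟨hq, hp⟩ <;> simp [hp, hq]
      · have := h3 f hf; simp [this]
    · rw [Finset.card_insert_of_notMem hne]; simp; omega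
    · rw [Q_edge a L E e h1 ha h3 he, h5, Finset.card_insert_of_notMem hne,
        Finset.prod_insert hne]
      simp only [List.length_cons, add_left_inj]
      split_ifs
      · rw [mul_inv, mul_comm]
      · simp

lemma pathPairs_cons_cons (a b : V) (l : List V) :
    pathPairs (a :: b :: l) = insert (a, b) (pathPairs (b :: l)) := by
  simp [pathPairs]

lemma pathPairs_single (a : V) : pathPairs [a] = ∅ := by simp [pathPairs]

lemma mem_pathPairs {l : List V} {p : V × V} (h : p ∈ pathPairs l) : p.1 ∈ l ∧ p.2 ∈ l := by
  obtain ⟨a, b⟩ := p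
  simp only [pathPairs, List.mem_toFinset] at h
  have := List.of_mem_zip h
  exact ⟨this.1, List.mem_of_mem_tail this.2⟩

/-- an attachment rule -/
def Keep (k : V × V → Finset (V × V)) : Prop :=
  ∀ p, k p = ∅ ∨ k p = {p} ∨ k p = {p.swap}

lemma Forest.attach {L : List V} {E : Finset (V × V)} (h : Forest L E)
    {k : V × V → Finset (V × V)} (hk : Keep k) {a p : V} (ha : a ∉ L) (hp : p ∈ L) :
    Forest (a :: L) (k (p, a) ∪ E) ∧ Forest (a :: L) (k (a, p) ∪ E) := by
  constructor
  · rcases hk (p, a) with h1 | h1 | h1 <;> rw [h1]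
    · rw [Finset.empty_union]; exact .iso a L E h ha
    · exact .edge a L E _ h ha (by simp [hp])
    · exact .edge a L E _ h ha (by simp [hp])
  · rcases hk (a, p) with h1 | h1 | h1 <;> rw [h1]
    · rw [Finset.empty_union]; exact .iso a L E h ha
    · exact .edge a L E _ h ha (by simp [hp])
    · exact .edge a L E _ h ha (by simp [hp])

/-- attach a path ending in a vertex of the forest -/
lemma Forest.tail {L : List V} {E : Finset (V × V)} (h : Forest L E)
    {k : V × V → Finset (V × V)} (hk : Keep k) {w : V} (hw : w ∈ L) :
    ∀ m : List V, m.Nodup → (∀ u ∈ m, u ∉ L) →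
      Forest (m ++ L) ((pathPairs (m ++ [w])).biUnion k ∪ E) := by
  intro m
  induction m with
  | nil => intro _ _; simpa [pathPairs_single] using h
  | cons b m ih =>
    intro hn hm
    have hF := ih hn.of_cons (fun u hu => hm u (by simp [hu]))
    have hb : b ∉ m ++ L := by
      simp only [List.mem_append, not_or]
      exact ⟨(List.nodup_cons.1 hn).1, hm b (by simp)⟩
    cases m with
    | nil =>
      have := (hF.attach hk hb (p := w) (by simp [hw])).2
      simpa [pathPairs_cons_cons, pathPairs_single] using this
    | cons c m =>
      have := (hF.attach hk hb (p := c) (by simp)).2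
      simpa [pathPairs_cons_cons, Finset.biUnion_insert, Finset.union_assoc] using this

/-- attach a path between two vertices of the forest, with at least one missing step -/
lemma Forest.bridge {k : V × V → Finset (V × V)} (hk : Keep k) {w : V} :
    ∀ (m : List V) (L : List V) (E : Finset (V × V)) (s : V), Forest L E → s ∈ L → w ∈ L →
      m.Nodup → (∀ u ∈ m, u ∉ L) → (∃ p ∈ pathPairs (s :: m ++ [w]), k p = ∅) →
      ∃ L', L'.Perm (m ++ L) ∧ Forest L' ((pathPairs (s :: m ++ [w])).biUnion k ∪ E) := by
  intro m
  induction m with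
  | nil =>
    intro L E s h hs hw _ _ ⟨p, hp, hp0⟩
    refine ⟨L, List.Perm.refl _, ?_⟩
    simp only [List.cons_append, List.nil_append, pathPairs_cons_cons, pathPairs_single,
      Finset.mem_insert, Finset.notMem_empty, or_false] at hp
    subst hp
    simpa [pathPairs_cons_cons, pathPairs_single, hp0] using h
  | cons b m ih =>
    intro L E s h hs hw hn hm ⟨p, hp, hp0⟩
    by_cases hk0 : k (s, b) = ∅
    · refine ⟨b :: m ++ L, List.Perm.refl _, ?_⟩
      have := h.tail hk hw (b :: m) hn hm
      simpa [pathPairs_cons_cons, Finset.biUnion_insert, hk0] using this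
    · have hb := hm b (by simp)
      have h' := (h.attach hk hb hs).1
      obtain ⟨L', hL', hF⟩ := ih (b :: L) _ b h' (by simp) (by simp [hw]) hn.of_cons
        (fun u hu => by
          simp only [List.mem_cons, not_or]
          refine ⟨?_, hm u (by simp [hu])⟩
          rintro rfl; exact (List.nodup_cons.1 hn).1 hu)
        ⟨p, by
          simp only [List.cons_append, pathPairs_cons_cons, Finset.mem_insert] at hp
          rcases hp with rfl | hp
          · exact absurd hp0 hk0
          · simpa using hp, hp0⟩
      refine ⟨L', hL'.trans List.perm_middle, ?_⟩
      convert hF using 1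
      simp only [List.cons_append, pathPairs_cons_cons, Finset.biUnion_insert]
      ac_rfl

lemma sum_list_comm {ι β R : Type*} [AddCommMonoid R] (s : Finset ι) (M : List β)
    (f : ι → β → R) : ∑ i ∈ s, (M.map (f i)).sum = (M.map fun b => ∑ i ∈ s, f i b).sum := by
  induction M with
  | nil => simp
  | cons b M ih => simp [Finset.sum_add_distrib, ih]

/-- inclusion-exclusion -/
lemma Q_incl_excl (L : List V) (E F : Finset (V × V)) (hF : F ⊆ E)
    (h : ∀ l : List V, l.Perm L → Resp (E \ F) l → ∃ e ∈ F, l.idxOf e.1 < l.idxOf e.2) :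
    ∑ S ∈ F.powerset, (-1 : K V) ^ S.card * Q L (E \ S) = 0 := by
  unfold Q
  simp only [← List.sum_map_mul_left]
  rw [sum_list_comm]
  apply List.sum_eq_zero
  intro x hx
  obtain ⟨l, hl, rfl⟩ := List.mem_map.1 hx
  rw [List.mem_permutations'] at hl
  by_cases hr : Resp (E \ F) l
  · obtain ⟨e, he, hlt⟩ := h l hl hr
    have key : ∑ S ∈ F.powerset, (∏ e ∈ S, (-1 : K V)) *
        ∏ e ∈ F \ S, (if l.idxOf e.1 < l.idxOf e.2 then (1 : K V) else 0) = 0 := by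
      rw [← Finset.prod_add]
      apply Finset.prod_eq_zero he
      rw [if_pos hlt]; ring
    calc _ = ∑ S ∈ F.powerset, ((∏ e ∈ S, (-1 : K V)) *
        ∏ e ∈ F \ S, (if l.idxOf e.1 < l.idxOf e.2 then (1 : K V) else 0)) * psi l := by
          apply Finset.sum_congr rfl
          intro S hS
          rw [Finset.prod_const, mul_assoc]
          congr 1
          by_cases hS' : Resp (E \ S) l
          · rw [if_pos hS', Finset.prod_eq_one, one_mul]
            intro f hf
            rw [Finset.mem_sdiff] at hf
            rw [if_pos (hS' f (by simp [hF hf.1, hf.2]))]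
          · rw [if_neg hS']
            simp only [Resp, not_forall] at hS'
            obtain ⟨f, hf, hf'⟩ := hS'
            rw [Finset.mem_sdiff] at hf
            have hfF : f ∈ F := by
              by_contra hc
              exact hf' (hr f (by simp [hf.1, hc]))
            rw [Finset.prod_eq_zero (i := f) (by simp [hfF, hf.2]) (if_neg hf'), zero_mul]
      _ = 0 := by rw [← Finset.sum_mul, key, zero_mul]
  · apply Finset.sum_eq_zero
    intro S hS
    rw [if_neg, mul_zero]
    intro h'
    apply hr
    intro e he
    rw [Finset.mem_sdiff] at he
    exact h' e (by
      rw [Finset.mem_sdiff]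
      exact ⟨he.1, fun hh => he.2 (Finset.mem_powerset.1 hS hh)⟩)

lemma alt_lemma {R : Type*} [CommRing R] {α : Type*} [DecidableEq α] (F : Finset α)
    (g : Finset α → R) (h0 : ∑ S ∈ F.powerset, (-1 : R) ^ S.card * g S = 0)
    (h2 : ∀ S ⊆ F, 2 ≤ S.card → g S = 0) : g ∅ = ∑ e ∈ F, g {e} := by
  have hsub : insert ∅ (F.image fun e => ({e} : Finset α)) ⊆ F.powerset := by
    intro S hS
    simp only [Finset.mem_insert, Finset.mem_image] at hS
    rcases hS with rfl | ⟨e, he, rfl⟩ <;> simp [*]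
  rw [← Finset.sum_subset hsub, Finset.sum_insert, Finset.sum_image] at h0
  · simp at h0
    linear_combination h0
  · intro a _ b _ hab
    simpa using hab
  · simp
  · intro S hS hS'
    simp only [Finset.mem_insert, Finset.mem_image, not_or, not_exists, not_and] at hS'
    rw [h2 S (Finset.mem_powerset.1 hS), mul_zero]
    have h1 : S.card ≠ 0 := by rw [Ne, Finset.card_eq_zero]; exact hS'.1
    have h3 : S.card ≠ 1 := by
      rw [Ne, Finset.card_eq_one]
      rintro ⟨a, rfl⟩
      exact hS'.2 a (by simpa using hS) rfl
    omega

lemma path_le (R : V → V → Prop) (hr : ∀ a, R a a) (ht : ∀ a b c, R a b → R b c → R a c) :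
    ∀ (l : List V) (a b : V), l.head? = some a → l.getLast? = some b →
      (∀ p ∈ pathPairs l, R p.1 p.2) → R a b := by
  intro l
  induction l with
  | nil => intro a b h; simp at h
  | cons c l ih =>
    intro a b ha hb hp
    cases l with
    | nil => simp at ha hb; subst ha; subst hb; exact hr _
    | cons d l =>
      simp only [List.head?_cons, Option.some.injEq] at ha
      subst ha
      simp only [pathPairs_cons_cons, Finset.mem_insert] at hp
      refine ht _ d _ (hp (c, d) (Or.inl rfl)) (ih d b rfl ?_ fun p h => hp p (Or.inr h))
      simpa [List.getLast?_cons_cons] using hb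

lemma path_sum : ∀ (l : List V) (a b : V), l.head? = some a → l.getLast? = some b → l.Nodup →
      ∑ p ∈ pathPairs l, (xv p.1 - xv p.2) = xv a - xv b := by
  intro l
  induction l with
  | nil => intro a b h; simp at h
  | cons c l ih =>
    intro a b ha hb hn
    cases l with
    | nil => simp at ha hb; subst ha; subst hb; simp [pathPairs_single]
    | cons d l =>
      simp only [List.head?_cons, Option.some.injEq] at ha
      subst ha
      have hnot : (c, d) ∉ pathPairs (d :: l) := fun h =>
        (List.nodup_cons.1 hn).1 (mem_pathPairs h).1
      rw [pathPairs_cons_cons, Finset.sum_insert hnot,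
        ih d b rfl (by simpa [List.getLast?_cons_cons] using hb) hn.of_cons]
      ring

lemma path_card : ∀ (l : List V), l.Nodup → (pathPairs l).card = l.length - 1 := by
  intro l
  induction l with
  | nil => simp [pathPairs]
  | cons c l ih =>
    intro hn
    cases l with
    | nil => simp [pathPairs_single]
    | cons d l =>
      have hnot : (c, d) ∉ pathPairs (d :: l) := fun h =>
        (List.nodup_cons.1 hn).1 (mem_pathPairs h).1
      rw [pathPairs_cons_cons, Finset.card_insert_of_notMem hnot, ih hn.of_cons]
      simp

lemma path_noswap : ∀ (l : List V), l.Nodup → ∀ p ∈ pathPairs l, p.swap ∉ pathPairs l := by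
  intro l
  induction l with
  | nil => simp [pathPairs]
  | cons c l ih =>
    intro hn
    cases l with
    | nil => simp [pathPairs_single]
    | cons d l =>
      have hc := (List.nodup_cons.1 hn).1
      rintro ⟨x, y⟩ hp hq
      simp only [pathPairs_cons_cons, Finset.mem_insert, Prod.swap_prod_mk, Prod.mk.injEq] at hp hq
      rcases hp with ⟨rfl, rfl⟩ | hp
      · rcases hq with ⟨rfl, _⟩ | hq
        · simp at hc
        · exact hc (mem_pathPairs hq).2
      · rcases hq with ⟨rfl, rfl⟩ | hq
        · exact hc (mem_pathPairs hp).2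
        · exact ih hn.of_cons _ hp hq

lemma path_form (l : List V) (a b : V) (h : l.head? = some a ∧ l.getLast? = some b)
    (hlen : 2 ≤ l.length) : ∃ m, l = a :: m ++ [b] := by
  obtain ⟨h1, h2⟩ := h
  cases l with
  | nil => simp at h1
  | cons c l =>
    simp only [List.head?_cons, Option.some.injEq] at h1
    subst h1
    have hl : l ≠ [] := by rintro rfl; simp at hlen
    refine ⟨l.dropLast, ?_⟩
    rw [List.getLast?_cons, List.getLast?_eq_getLast_of_ne_nil hl] at h2
    simp only [Option.getD_some, Option.some.injEq] at h2
    rw [← h2, List.cons_append, List.dropLast_append_getLast]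

lemma orient_self (l : List V) : orientEdges l (pathPairs l) = pathPairs l := by
  simp [orientEdges]

lemma orient_card (l : List V) (hn : l.Nodup) (F : Finset (V × V)) (hF : F ⊆ pathPairs l) :
    (orientEdges l F).card = (pathPairs l).card := by
  unfold orientEdges
  rw [Finset.card_union_of_disjoint, Finset.card_image_of_injective _ Prod.swap_injective,
    Finset.card_sdiff_of_subset hF]
  · have := Finset.card_le_card hF
    omega
  · rw [Finset.disjoint_left]
    intro p hp hq
    obtain ⟨q, hq', rfl⟩ := Finset.mem_image.1 hq
    exact path_noswap l hn q (Finset.mem_sdiff.1 hq').1 (hF hp)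

lemma biUnion_orient (l : List V) (hn : l.Nodup) (F S : Finset (V × V)) (hF : F ⊆ pathPairs l)
    (hS : S ⊆ F) : (pathPairs l).biUnion
      (fun p => if p ∈ S then ∅ else if p ∈ F then {p} else {p.swap}) = orientEdges l F \ S := by
  ext q
  simp only [Finset.mem_biUnion, orientEdges, Finset.mem_sdiff, Finset.mem_union,
    Finset.mem_image]
  constructor
  · rintro ⟨p, hp, hq⟩
    split_ifs at hq with h1 h2
    · simp at hq
    · simp only [Finset.mem_singleton] at hq; subst hq
      exact ⟨Or.inl h2, h1⟩
    · simp only [Finset.mem_singleton] at hq; subst hq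
      exact ⟨Or.inr ⟨p, ⟨hp, h2⟩, rfl⟩, fun h => path_noswap l hn p hp (hF (hS h))⟩
  · rintro ⟨h | ⟨p, hp, rfl⟩, h'⟩
    · exact ⟨q, hF h, by simp [h, h']⟩
    · refine ⟨p, hp.1, ?_⟩
      rw [if_neg (fun h => hp.2 (hS h)), if_neg hp.2]; simp

end Helpers

lemma forest_value (V : Type) [Fintype V] [DecidableEq V]
    (v v' : V) (m0 m1 m2 : List V)
    (hnd0 : (v :: m0 ++ [v']).Nodup) (hnd1 : (v :: m1 ++ [v']).Nodup)
    (hnd2 : (v :: m2 ++ [v']).Nodup)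
    (hint01 : ∀ u : V, u ∈ v :: m0 ++ [v'] → u ∈ v :: m1 ++ [v'] → u = v ∨ u = v')
    (hint02 : ∀ u : V, u ∈ v :: m0 ++ [v'] → u ∈ v :: m2 ++ [v'] → u = v ∨ u = v')
    (hint12 : ∀ u : V, u ∈ v :: m1 ++ [v'] → u ∈ v :: m2 ++ [v'] → u = v ∨ u = v')
    (hcover : ∀ u : V, u ∈ v :: m0 ++ [v'] ∨ u ∈ v :: m1 ++ [v'] ∨ u ∈ v :: m2 ++ [v'])
    (F0 : Finset (V × V))
    (hF0 : F0 ⊆ pathPairs (v :: m0 ++ [v']))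
    (E : Finset (V × V))
    (hE : E = orientEdges (v :: m0 ++ [v']) F0 ∪ pathPairs (v :: m1 ++ [v']) ∪
      pathPairs (v :: m2 ++ [v']))
    (hdisj01 : Disjoint (orientEdges (v :: m0 ++ [v']) F0) (pathPairs (v :: m1 ++ [v'])))
    (hdisj02 : Disjoint (orientEdges (v :: m0 ++ [v']) F0) (pathPairs (v :: m2 ++ [v'])))
    (hdisj12 : Disjoint (pathPairs (v :: m1 ++ [v'])) (pathPairs (v :: m2 ++ [v'])))
    (S T : Finset (V × V)) (hS : S ⊆ F0) (hT : T ⊆ pathPairs (v :: m1 ++ [v']))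
    (hS0 : S.Nonempty) (hT0 : T.Nonempty) :
    Q (Finset.univ : Finset V).toList ((E \ S) \ T) =
      if S.card = 1 ∧ T.card = 1 then (∏ e ∈ (E \ S) \ T, (xv e.1 - xv e.2))⁻¹ else 0 := by
  have hSO : S ⊆ orientEdges (v :: m0 ++ [v']) F0 := fun x hx =>
    Finset.mem_union_left _ (hS hx)
  have hk2 : Keep (fun p : V × V => ({p} : Finset (V × V))) := fun p => by simp
  have hk1 : Keep (fun p : V × V => if p ∈ T then (∅ : Finset (V × V))
      else if p ∈ pathPairs (v :: m1 ++ [v']) then {p} else {p.swap}) := fun p => by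
    dsimp only; split_ifs <;> simp
  have hk0 : Keep (fun p : V × V => if p ∈ S then (∅ : Finset (V × V))
      else if p ∈ F0 then {p} else {p.swap}) := fun p => by
    dsimp only; split_ifs <;> simp
  have hn0 := hnd0
  have hn1 := hnd1
  have hn2 := hnd2
  simp only [List.cons_append, List.nodup_cons, List.nodup_append, List.mem_append,
    List.mem_singleton, not_or] at hn0 hn1 hn2
  have f2 := (Forest.single v').tail hk2 (w := v') (by simp) (v :: m2)
    (by rw [List.nodup_cons]; exact ⟨hn2.1.1, hn2.2.1⟩)
    (by
      intro u hu hu'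
      simp only [List.mem_singleton] at hu'
      subst hu'
      rcases List.mem_cons.1 hu with h | h
      · exact hn2.1.2 h.symm
      · exact hn2.2.2.2 u h u rfl rfl)
  obtain ⟨L1, hp1, f1⟩ := Forest.bridge hk1 (w := v') m1 _ _ v f2 (by simp) (by simp)
    hn1.2.1
    (by
      intro u hu hu'
      rcases hint12 u (by simp [hu]) hu' with h | h
      · subst h; exact hn1.1.1 hu
      · exact hn1.2.2.2 u hu v' rfl h)
    (by obtain ⟨t, ht⟩ := hT0; exact ⟨t, hT ht, by simp [ht]⟩)
  obtain ⟨L0, hp0, f0⟩ := Forest.bridge hk0 (w := v') m0 _ _ v f1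
    (by rw [hp1.mem_iff]; simp) (by rw [hp1.mem_iff]; simp)
    hn0.2.1
    (by
      intro u hu hu'
      have : u = v ∨ u = v' := by
        rw [hp1.mem_iff, List.mem_append] at hu'
        rcases hu' with h | h
        · exact hint01 u (by simp [hu]) (by simp [h])
        · exact hint02 u (by simp [hu]) h
      rcases this with h | h
      · subst h; exact hn0.1.1 hu
      · exact hn0.2.2.2 u hu v' rfl h)
    (by obtain ⟨t, ht⟩ := hS0; exact ⟨t, hF0 (hS ht), by simp [ht]⟩)
  rw [biUnion_orient _ hnd0 _ _ hF0 hS, biUnion_orient _ hnd1 _ _ (Finset.Subset.refl _) hT,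
    orient_self, Finset.biUnion_singleton_eq_self, Finset.union_empty] at f0
  have hEq : orientEdges (v :: m0 ++ [v']) F0 \ S ∪
      (pathPairs (v :: m1 ++ [v']) \ T ∪ pathPairs (v :: m2 ++ [v'])) = (E \ S) \ T := by
    subst hE
    rw [Finset.disjoint_left] at hdisj01 hdisj02 hdisj12
    refine Finset.ext fun x => ?_
    have a1 := @hdisj01 x
    have a2 := @hdisj02 x
    have a3 := @hdisj12 x
    have a4 := @hSO x
    have a5 := @hT x
    simp only [Finset.mem_union, Finset.mem_sdiff]
    clear * - a1 a2 a3 a4 a5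
    generalize (x ∈ orientEdges (v :: m0 ++ [v']) F0) = A at *
    generalize (x ∈ pathPairs (v :: m1 ++ [v'])) = B at *
    generalize (x ∈ pathPairs (v :: m2 ++ [v'])) = C at *
    generalize (x ∈ S) = D at *
    generalize (x ∈ T) = F at *
    tauto
  rw [hEq] at f0
  obtain ⟨g1, -, -, g4, g5⟩ := f0.spec
  have hperm : L0.Perm (Finset.univ : Finset V).toList := by
    rw [List.perm_ext_iff_of_nodup g1 (Finset.nodup_toList _)]
    intro u
    rw [hp0.mem_iff, List.mem_append, hp1.mem_iff, List.mem_append]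
    simp only [Finset.mem_toList, Finset.mem_univ, iff_true]
    have := hcover u
    simp only [List.cons_append, List.mem_cons, List.mem_append, List.mem_singleton] at this ⊢
    clear * - this
    tauto
  rw [← Q_perm _ _ hperm, g5]
  have hc : ((E \ S) \ T).card + S.card + T.card = m0.length + m1.length + m2.length + 3 := by
    have hSE : S ⊆ E := by
      rw [hE]; intro x hx
      exact Finset.mem_union_left _ (Finset.mem_union_left _ (hSO hx))
    have hTE : T ⊆ E \ S := by
      intro x hx
      rw [Finset.mem_sdiff, hE]
      refine ⟨by
        rw [Finset.mem_union, Finset.mem_union]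
        exact Or.inl (Or.inr (hT hx)), fun h => ?_⟩
      exact Finset.disjoint_left.1 hdisj01 (hSO h) (hT hx)
    have e1 := Finset.card_sdiff_add_card_eq_card hTE
    have e2 := Finset.card_sdiff_add_card_eq_card hSE
    have e3 : E.card = m0.length + m1.length + m2.length + 3 := by
      rw [hE, Finset.card_union_of_disjoint, Finset.card_union_of_disjoint hdisj01,
        orient_card _ hnd0 _ hF0, path_card _ hnd0, path_card _ hnd1, path_card _ hnd2]
      · simp; omega
      · exact Finset.disjoint_union_left.2 ⟨hdisj02, hdisj12⟩
    omega
  have hlen : L0.length = m0.length + m1.length + m2.length + 2 := by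
    rw [hp0.length_eq, List.length_append, hp1.length_eq]
    simp; omega
  have hSc := hS0.card_pos
  have hTc := hT0.card_pos
  congr 1
  rw [eq_iff_iff]
  omega

/-- two-loop graph.  `G` consists of three internally disjoint paths
`l0, l1, l2` from `v` to `v'`; all steps of `l1` and `l2` are forward edges
(`F1 = pathPairs l1`, `F2 = pathPairs l2`, so `E_1 = F1`, `E_2 = F2` and `E_{1̄} = ∅`),
while `l0` may contain backward edges (`E_0 = F0`, `E_{0̄} = (pathPairs l0 \ F0).swap`).
Then `N(G) = (Σ_{E_{0̄}} X_e)(Σ_{E_{1̄}} X_e) + (Σ_{E_{0̄}} X_e)(Σ_{E_2} X_e)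
+ (Σ_{E_1} X_e)(Σ_{E_2} X_e)` where `X_e = x_{α(e)} - x_{ω(e)}`. -/
theorem NG_two_loops (V : Type) [Fintype V] [DecidableEq V]
    (v v' : V) (hvv : v ≠ v')
    (l0 l1 l2 : List V)
    (h0 : l0.head? = some v ∧ l0.getLast? = some v')
    (h1 : l1.head? = some v ∧ l1.getLast? = some v')
    (h2 : l2.head? = some v ∧ l2.getLast? = some v')
    (hlen0 : 2 ≤ l0.length) (hlen1 : 2 ≤ l1.length) (hlen2 : 2 ≤ l2.length)
    (hnd0 : l0.Nodup) (hnd1 : l1.Nodup) (hnd2 : l2.Nodup)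
    (hint01 : ∀ u : V, u ∈ l0 → u ∈ l1 → u = v ∨ u = v')
    (hint02 : ∀ u : V, u ∈ l0 → u ∈ l2 → u = v ∨ u = v')
    (hint12 : ∀ u : V, u ∈ l1 → u ∈ l2 → u = v ∨ u = v')
    (hcover : ∀ u : V, u ∈ l0 ∨ u ∈ l1 ∨ u ∈ l2)
    (F0 F1 F2 : Finset (V × V))
    (hF0 : F0 ⊆ pathPairs l0) (hF1 : F1 = pathPairs l1) (hF2 : F2 = pathPairs l2)
    (E : Finset (V × V))
    (hE : E = orientEdges l0 F0 ∪ orientEdges l1 F1 ∪ orientEdges l2 F2)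
    (hdisj01 : Disjoint (orientEdges l0 F0) (orientEdges l1 F1))
    (hdisj02 : Disjoint (orientEdges l0 F0) (orientEdges l2 F2))
    (hdisj12 : Disjoint (orientEdges l1 F1) (orientEdges l2 F2))
    (hacyc : Acyclic E) :
    NG (Finset.univ : Finset V) E =
      (∑ e ∈ (pathPairs l0 \ F0).image Prod.swap, (xv e.1 - xv e.2)) *
          (∑ e ∈ (pathPairs l1 \ F1).image Prod.swap, (xv e.1 - xv e.2)) +
        (∑ e ∈ (pathPairs l0 \ F0).image Prod.swap, (xv e.1 - xv e.2)) *
          (∑ e ∈ F2, (xv e.1 - xv e.2)) +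
        (∑ e ∈ F1, (xv e.1 - xv e.2)) * (∑ e ∈ F2, (xv e.1 - xv e.2)) := by
  subst hF1 hF2
  obtain ⟨m0, rfl⟩ := path_form l0 v v' h0 hlen0
  obtain ⟨m1, rfl⟩ := path_form l1 v v' h1 hlen1
  obtain ⟨m2, rfl⟩ := path_form l2 v v' h2 hlen2
  rw [orient_self, orient_self] at hE
  rw [orient_self] at hdisj01 hdisj02 hdisj12
  rw [orient_self] at hdisj12
  set P0 := pathPairs (v :: m0 ++ [v']) with hP0
  set P1 := pathPairs (v :: m1 ++ [v']) with hP1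
  set P2 := pathPairs (v :: m2 ++ [v']) with hP2
  have hO : F0 ⊆ orientEdges (v :: m0 ++ [v']) F0 := Finset.subset_union_left
  have hval := forest_value V v v' m0 m1 m2 hnd0 hnd1 hnd2 hint01 hint02 hint12 hcover F0 hF0 E hE
    hdisj01 hdisj02 hdisj12
  have hF0E : F0 ⊆ E := by
    rw [hE]; intro x hx
    exact Finset.mem_union_left _ (Finset.mem_union_left _ (hO hx))
  have hP1E : P1 ⊆ E := by rw [hE]; intro x hx; simp [hx]
  have hP2E : P2 ⊆ E := by rw [hE]; intro x hx; simp [hx]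
  have hF01 : Disjoint F0 P1 := Finset.disjoint_of_subset_left hO hdisj01
  have hF02 : Disjoint F0 P2 := Finset.disjoint_of_subset_left hO hdisj02
  -- contradiction from two monotone paths
  have hcontra : ∀ l : List V, l.Perm (Finset.univ : Finset V).toList →
      (∀ p ∈ P2, l.idxOf p.1 < l.idxOf p.2) → l.idxOf v' ≤ l.idxOf v → False := by
    intro l hl h2' h3
    have h4 := path_le (fun a b => l.idxOf a ≤ l.idxOf b) (fun a => le_refl _)
      (fun a b c => le_trans) _ v v' h2.1 h2.2 (fun p hp => (h2' p hp).le)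
    have hv : v ∈ l := by rw [hl.mem_iff]; simp
    exact hvv ((List.idxOf_inj hv).1 (le_antisymm h4 h3))
  have hQ1 : ∀ S ⊆ F0, S.Nonempty → Q (Finset.univ : Finset V).toList (E \ S) =
      ∑ f ∈ P1, Q (Finset.univ : Finset V).toList ((E \ S) \ {f}) := by
    intro S hS hS0
    have := alt_lemma P1 (fun T => Q (Finset.univ : Finset V).toList ((E \ S) \ T)) ?_ ?_
    · simpa using this
    · apply Q_incl_excl
      · intro x hx
        exact Finset.mem_sdiff.2 ⟨hP1E hx, fun h => Finset.disjoint_left.1 hF01 (hS h) hx⟩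
      · intro l hl hr
        by_contra hc
        push Not at hc
        refine hcontra l hl (fun p hp => hr p ?_) ?_
        · simp only [Finset.mem_sdiff]
          exact ⟨⟨hP2E hp, fun h => Finset.disjoint_left.1 hF02 (hS h) hp⟩,
            fun h => Finset.disjoint_left.1 hdisj12 h hp⟩
        · exact path_le (fun a b => l.idxOf b ≤ l.idxOf a) (fun a => le_refl _)
            (fun a b c h h' => le_trans h' h) _ v v' h1.1 h1.2 hc
    · intro T hT hT2
      rw [hval S T hS hT hS0 (Finset.card_pos.1 (by omega)), if_neg (by omega)]
  have hQ0 : Q (Finset.univ : Finset V).toList E =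
      ∑ e ∈ F0, Q (Finset.univ : Finset V).toList (E \ {e}) := by
    have := alt_lemma F0 (fun S => Q (Finset.univ : Finset V).toList (E \ S)) ?_ ?_
    · simpa using this
    · apply Q_incl_excl _ _ _ hF0E
      intro l hl hr
      by_contra hc
      push Not at hc
      refine hcontra l hl (fun p hp => hr p ?_) ?_
      · exact Finset.mem_sdiff.2 ⟨hP2E hp, fun h => Finset.disjoint_left.1 hF02 h hp⟩
      · refine path_le (fun a b => l.idxOf b ≤ l.idxOf a) (fun a => le_refl _)
            (fun a b c h h' => le_trans h' h) _ v v' h0.1 h0.2 (fun p hp => ?_)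
        by_cases hpF : p ∈ F0
        · exact hc p hpF
        · refine (hr p.swap ?_).le
          refine Finset.mem_sdiff.2 ⟨?_, fun h => path_noswap _ hnd0 p hp (hF0 h)⟩
          rw [hE]
          apply Finset.mem_union_left
          apply Finset.mem_union_left
          exact Finset.mem_union_right _
            (Finset.mem_image_of_mem _ (Finset.mem_sdiff.2 ⟨hp, hpF⟩))
    · intro S hS hS2
      have hS0 : S.Nonempty := Finset.card_pos.1 (by omega)
      rw [hQ1 S hS hS0]
      apply Finset.sum_eq_zero
      intro f hf
      rw [hval S {f} hS (Finset.singleton_subset_iff.2 hf) hS0 (by simp), if_neg (by omega)]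
  have hEne : ∀ e ∈ E, xv e.1 - xv e.2 ≠ 0 := by
    intro e he
    apply xv_ne
    intro h
    apply hacyc e.1
    apply Relation.TransGen.single
    have : e = (e.1, e.1) := Prod.ext rfl h.symm
    rwa [← this]
  have hN : NG (Finset.univ : Finset V) E =
      (∑ e ∈ F0, (xv e.1 - xv e.2)) * (∑ e ∈ P1, (xv e.1 - xv e.2)) := by
    rw [NG, PsiG_eq_Q _ _ (by simp), hQ0, Finset.sum_mul_sum, Finset.sum_mul]
    apply Finset.sum_congr rfl
    intro e he
    rw [hQ1 {e} (by simpa using he) (by simp), Finset.sum_mul]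
    apply Finset.sum_congr rfl
    intro f hf
    rw [hval {e} {f} (by simpa using he) (Finset.singleton_subset_iff.2 hf) (by simp) (by simp),
      if_pos (by simp)]
    have hfE : f ∈ E \ {e} := by
      rw [Finset.mem_sdiff, Finset.mem_singleton]
      refine ⟨hP1E hf, ?_⟩
      rintro rfl
      exact Finset.disjoint_left.1 hF01 he hf
    rw [Finset.sdiff_singleton_eq_erase, Finset.sdiff_singleton_eq_erase] at *
    rw [← Finset.mul_prod_erase E _ (hF0E he), ← Finset.mul_prod_erase (E.erase e) _ hfE]
    have hne : ∏ x ∈ (E.erase e).erase f, (xv x.1 - xv x.2) ≠ 0 :=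
      Finset.prod_ne_zero_iff.2 fun x hx =>
        hEne x (Finset.mem_of_mem_erase (Finset.mem_of_mem_erase hx))
    field_simp
  have s0 := path_sum _ v v' h0.1 h0.2 hnd0
  have s1 := path_sum _ v v' h1.1 h1.2 hnd1
  have s2 := path_sum _ v v' h2.1 h2.2 hnd2
  have hB : ∑ e ∈ (P0 \ F0).image Prod.swap, (xv e.1 - xv e.2) =
      -∑ e ∈ P0 \ F0, (xv e.1 - xv e.2) := by
    rw [Finset.sum_image (fun a _ b _ h => Prod.swap_injective h), ← Finset.sum_neg_distrib]
    exact Finset.sum_congr rfl fun e _ => by simp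
  have s0' := Finset.sum_sdiff (f := fun e : V × V => (xv e.1 - xv e.2 : K V)) hF0
  rw [hN, hB, Finset.sdiff_self, Finset.image_empty, Finset.sum_empty, s1, s2]
  rw [s0] at s0'
  linear_combination (xv v - xv v') * s0'
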